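/- Fix λ' > 0 and for ξ' ∈ ℝ^N let u(y; ξ') = (λ'/(λ'² + |y−ξ'|²))^{(N−4)/2}. Consider the pointwise expression E(y, ξ') = Σ_{i,j,s,t=1}^N H̄_{tj}(y) H̄_{it}(y) (∂_i∂_s∂_s u)(y; ξ') (∂_j u)(y; ξ') (derivatives in y). Then: (i) ∫_{ℝ^N} E(y, 0) dy = 0; and (ii) for all p, q ∈ {1,…,N}, ∫_{ℝ^N} [∂²E/∂ξ'_p∂ξ'_q](y, ξ')|_{ξ'=0} dy = |S^{N−1}| · (Σ_{i,j,k=1}^N (W_{ikjp}+W_{ipjk})(W_{ikjq}+W_{iqjk})) · λ'^{N−4} · [(N−2)(N−4)²/(N(N+2))] · ∫₀^∞ f(r²)² [ N r^{N+5}/(λ'²+r²)^N − (N+2) r^{N+3}/(λ'²+r²)^{N−1} ] dr. -/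

import Mathlib

open scoped BigOperators
open MeasureTheory

noncomputable section

/-- The partial derivative `∂f/∂y_i` of a function on Euclidean space. -/
def pd (N : ℕ) (i : Fin N) (f : EuclideanSpace ℝ (Fin N) → ℝ) :
    EuclideanSpace ℝ (Fin N) → ℝ :=
  fun y => fderiv ℝ f y (EuclideanSpace.single i 1)

/-- `H_{ij}(y) = Σ_{p,q} W_{ipjq} y_p y_q`. -/
def Hmat (N : ℕ) (W : Fin N → Fin N → Fin N → Fin N → ℝ) (i j : Fin N)
    (y : EuclideanSpace ℝ (Fin N)) : ℝ :=
  ∑ p : Fin N, ∑ q : Fin N, W i p j q * y p * y q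

/-- `H̄_{ij}(y) = f(|y|²) H_{ij}(y)`. -/
def Hbar (N : ℕ) (W : Fin N → Fin N → Fin N → Fin N → ℝ) (f : ℝ → ℝ) (i j : Fin N)
    (y : EuclideanSpace ℝ (Fin N)) : ℝ :=
  f (‖y‖ ^ 2) * Hmat N W i j y

/-- The surface measure on the unit sphere `S^{N-1} ⊂ ℝ^N`. -/
def sphereMeasure (N : ℕ) :
    Measure (Metric.sphere (0 : EuclideanSpace ℝ (Fin N)) 1) :=
  (volume : Measure (EuclideanSpace ℝ (Fin N))).toSphere

/-- `|S^{N-1}|`, the total surface measure of the unit sphere in `ℝ^N`. -/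
def sphereArea (N : ℕ) : ℝ := (sphereMeasure N Set.univ).toReal

/-- The second mixed derivative `∂²F/∂ξ_p∂ξ_q` at `ξ = 0` of a function of `ξ ∈ ℝ^N`. -/
def d2Param (N : ℕ) (p q : Fin N) (F : EuclideanSpace ℝ (Fin N) → ℝ) : ℝ :=
  deriv (fun a : ℝ =>
    deriv (fun b : ℝ =>
      F (a • EuclideanSpace.single p (1 : ℝ) + b • EuclideanSpace.single q (1 : ℝ))) 0) 0

/-!
Since `W` is antisymmetric in its last two indices, `H(y) y = 0`. The derivatives `∂_iΔu` and `∂_ju`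
of the bubble centred at `ξ` are multiples of `(y - ξ)_i` and `(y - ξ)_j`, so
`E(y, ξ) = |H̄(y) ξ|² G(|y - ξ|²)` with `G` explicit. Hence `E(y, 0) = 0`, and the second derivative
at `ξ = 0` only sees `G` at `ξ = 0`: it is `2 f² (H²)_{pq} G(|y|²)`. As `(H²)_{pq}` is homogeneous
of degree four, polar coordinates split the integral into a radial factor and a fourth moment of the
sphere. Such moments are sums over the three pairings of the indices (by Stein's identity for the
Gaussian); the pairing inside each `H` dies because `W` is trace-free, and the other two give
`∑ W_{tapb} (W_{taqb} + W_{tbqa})`, half the contraction in the statement.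
-/

local notation "dim" => Module.finrank ℝ

section PolarCoordinates

variable {E : Type*} [NormedAddCommGroup E] [NormedSpace ℝ E] [MeasurableSpace E] [BorelSpace E]

lemma integral_volumeIoiPow (n : ℕ) (g : ℝ → ℝ) :
    ∫ r : Set.Ioi (0 : ℝ), g r ∂.volumeIoiPow n = ∫ r in Set.Ioi (0 : ℝ), r ^ n * g r := by
  simp only [Measure.volumeIoiPow, ENNReal.ofReal]
  rw [integral_withDensity_eq_integral_smul (measurable_subtype_coe.pow_const n).real_toNNReal,
    integral_subtype_comap measurableSet_Ioi fun r ↦ (r ^ n).toNNReal • g r]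
  refine setIntegral_congr_fun measurableSet_Ioi fun r hr ↦ ?_
  simp only [NNReal.smul_def, Real.coe_toNNReal _ (pow_nonneg (Set.mem_Ioi.1 hr).le n),
    smul_eq_mul]

lemma integrable_volumeIoiPow_iff (n : ℕ) (g : ℝ → ℝ) :
    Integrable (fun r : Set.Ioi (0 : ℝ) ↦ g r) (.volumeIoiPow n) ↔
      IntegrableOn (fun r ↦ r ^ n * g r) (Set.Ioi 0) := by
  simp only [Measure.volumeIoiPow, ENNReal.ofReal]
  rw [integrable_withDensity_iff_integrable_smul
      (measurable_subtype_coe.pow_const n).real_toNNReal,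
    integrableOn_iff_comap_subtypeVal measurableSet_Ioi]
  refine integrable_congr (.of_forall fun r ↦ ?_)
  simp only [NNReal.smul_def, Real.coe_toNNReal _ (pow_nonneg (Set.mem_Ioi.1 r.2).le n),
    smul_eq_mul, Function.comp_apply]

variable {Q : E → ℝ} {k : ℕ}

omit [MeasurableSpace E] [BorelSpace E] in
lemma homogeneous_mul_radial_eq_polar (hQ : ∀ (r : ℝ) y, Q (r • y) = r ^ k * Q y) (φ : ℝ → ℝ)
    (x : ({0}ᶜ : Set E)) :
    Q x * φ ‖x.1‖ = Q (homeomorphUnitSphereProd E x).1 *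
      ((homeomorphUnitSphereProd E x).2.1 ^ k * φ (homeomorphUnitSphereProd E x).2) := by
  have hx : ‖x.1‖ ≠ 0 := norm_ne_zero_iff.2 x.2
  simp only [homeomorphUnitSphereProd_apply_fst_coe, homeomorphUnitSphereProd_apply_snd_coe, hQ,
    inv_pow]
  field_simp

variable [FiniteDimensional ℝ E] [Nontrivial E] (μ : Measure E) [μ.IsAddHaarMeasure]

lemma integral_homogeneous_mul_radial (hQ : ∀ (r : ℝ) y, Q (r • y) = r ^ k * Q y) (φ : ℝ → ℝ) :
    ∫ y, Q y * φ ‖y‖ ∂μ =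
      (∫ z, Q z.1 ∂μ.toSphere) * ∫ r in Set.Ioi (0 : ℝ), r ^ (dim E - 1 + k) * φ r := calc
  _ = ∫ x : ({0}ᶜ : Set E), Q x * φ ‖x.1‖ ∂(μ.comap (↑)) := by
    rw [integral_subtype_comap (measurableSet_singleton _).compl fun x ↦ Q x * φ ‖x‖,
      restrict_compl_singleton]
  _ = ∫ x, Q x.1 * (x.2.1 ^ k * φ x.2) ∂μ.toSphere.prod (.volumeIoiPow (dim E - 1)) := by
    simp only [homogeneous_mul_radial_eq_polar hQ]
    exact μ.measurePreserving_homeomorphUnitSphereProd.integral_comp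
      (Homeomorph.measurableEmbedding _)
      (fun x : Metric.sphere (0 : E) 1 × Set.Ioi (0 : ℝ) ↦ Q x.1 * (x.2.1 ^ k * φ x.2))
  _ = (∫ z, Q z.1 ∂μ.toSphere) *
        ∫ r : Set.Ioi (0 : ℝ), r.1 ^ k * φ r ∂.volumeIoiPow (dim E - 1) :=
    integral_prod_mul (fun z : Metric.sphere (0 : E) 1 ↦ Q z)
      (fun r : Set.Ioi (0 : ℝ) ↦ r.1 ^ k * φ r)
  _ = _ := by simp only [integral_volumeIoiPow _ fun r ↦ r ^ k * φ r, pow_add, mul_assoc]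

lemma integrable_homogeneous_mul_radial (hQ : ∀ (r : ℝ) y, Q (r • y) = r ^ k * Q y)
    (hQc : Continuous Q) {φ : ℝ → ℝ}
    (hφ : IntegrableOn (fun r ↦ r ^ (dim E - 1 + k) * φ r) (Set.Ioi 0)) :
    Integrable (fun y ↦ Q y * φ ‖y‖) μ := by
  have hQs : Integrable (fun z : Metric.sphere (0 : E) 1 ↦ Q z) μ.toSphere :=
    (hQc.comp continuous_subtype_val).integrable_of_hasCompactSupport (.of_compactSpace _)
  have hφr : Integrable (fun r : Set.Ioi (0 : ℝ) ↦ r.1 ^ k * φ r)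
      (.volumeIoiPow (dim E - 1)) := by
    rw [integrable_volumeIoiPow_iff _ fun r ↦ r ^ k * φ r]
    simpa only [pow_add, mul_assoc] using hφ
  rw [← restrict_compl_singleton (μ := μ) 0, ← IntegrableOn,
    integrableOn_iff_comap_subtypeVal (measurableSet_singleton _).compl]
  refine ((μ.measurePreserving_homeomorphUnitSphereProd.integrable_comp_emb
    (Homeomorph.measurableEmbedding _)).2 (hQs.mul_prod hφr)).congr (.of_forall fun x ↦ ?_)
  exact (homogeneous_mul_radial_eq_polar hQ φ x).symm

end PolarCoordinates

section GaussianMoments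

open scoped RealInnerProductSpace

/-- The unnormalised standard Gaussian density `exp (-‖y‖² / 2)`, the radial weight against which
the fourth moments of the sphere are computed. -/
def gaussianWeight {E : Type*} [Norm E] (y : E) : ℝ := Real.exp (-(1 / 2) * ‖y‖ ^ 2)

lemma gaussianWeight_pos {E : Type*} [Norm E] (y : E) : 0 < gaussianWeight y := Real.exp_pos _

lemma continuous_gaussianWeight {E : Type*} [SeminormedAddCommGroup E] :
    Continuous (gaussianWeight : E → ℝ) := by
  unfold gaussianWeight
  fun_prop

variable {E : Type*} [NormedAddCommGroup E] [InnerProductSpace ℝ E]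

lemma hasLineDerivAt_gaussianWeight (v y : E) :
    HasLineDerivAt ℝ gaussianWeight (-⟪v, y⟫ * gaussianWeight y) y v := by
  have h : HasFDerivAt (gaussianWeight : E → ℝ) _ y :=
    ((hasStrictFDerivAt_norm_sq y).hasFDerivAt.const_mul (-(1 / 2 : ℝ))).exp
  convert h.hasLineDerivAt v using 1
  simp only [gaussianWeight, smul_apply, innerSL_apply_apply,
    real_inner_comm, smul_eq_mul, nsmul_eq_mul]
  push_cast
  ring

lemma hasLineDerivAt_inner_right (v a y : E) :
    HasLineDerivAt ℝ (fun y ↦ ⟪a, y⟫) ⟪v, a⟫ y v := by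
  rw [real_inner_comm]
  exact (innerSL ℝ a).hasFDerivAt.hasLineDerivAt v

variable [FiniteDimensional ℝ E] [MeasurableSpace E] [BorelSpace E]
  (μ : Measure E) [μ.IsAddHaarMeasure]

lemma integrable_norm_pow_mul_gaussianWeight [Nontrivial E] (k : ℕ) :
    Integrable (fun y ↦ ‖y‖ ^ k * gaussianWeight y) μ := by
  have key := (integrable_fun_norm_addHaar μ (E := E)
    (f := fun r : ℝ ↦ r ^ k * Real.exp (-(1 / 2) * r ^ 2))).2
  have hexp := integrableOn_rpow_mul_exp_neg_mul_sq (b := 1 / 2) (by norm_num)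
    (s := (Module.finrank ℝ E - 1 + k : ℕ)) (neg_one_lt_zero.trans_le (Nat.cast_nonneg _))
  refine key (hexp.congr_fun (fun r _ ↦ ?_) measurableSet_Ioi)
  simp only [Real.rpow_natCast, smul_eq_mul, pow_add, mul_assoc]

lemma integrable_prod_inner_mul_gaussianWeight [Nontrivial E] {ι : Type*} (s : Finset ι)
    (v : ι → E) : Integrable (fun y ↦ (∏ i ∈ s, ⟪v i, y⟫) * gaussianWeight y) μ := by
  have hcont : Continuous fun y : E ↦ (∏ i ∈ s, ⟪v i, y⟫) * gaussianWeight y :=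
    (by fun_prop : Continuous fun y : E ↦ ∏ i ∈ s, ⟪v i, y⟫).mul continuous_gaussianWeight
  refine ((integrable_norm_pow_mul_gaussianWeight μ s.card).const_mul (∏ i ∈ s, ‖v i‖)).mono'
    hcont.aestronglyMeasurable (.of_forall fun y ↦ ?_)
  rw [norm_mul, Real.norm_of_nonneg (gaussianWeight_pos y).le, norm_prod, ← mul_assoc,
    ← Finset.prod_const, ← Finset.prod_mul_distrib]
  gcongr
  · exact (gaussianWeight_pos y).le
  · exact norm_inner_le_norm _ _

lemma integral_inner_mul_gaussianWeight {v : E} {Q Q' : E → ℝ}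
    (hQ : ∀ y, HasLineDerivAt ℝ Q (Q' y) y v)
    (hQ'i : Integrable (fun y ↦ Q' y * gaussianWeight y) μ)
    (hvQi : Integrable (fun y ↦ ⟪v, y⟫ * Q y * gaussianWeight y) μ)
    (hQi : Integrable (fun y ↦ Q y * gaussianWeight y) μ) :
    ∫ y, ⟪v, y⟫ * Q y * gaussianWeight y ∂μ = ∫ y, Q' y * gaussianWeight y ∂μ := by
  have hparts := integral_bilinear_hasLineDerivAt_right_eq_neg_left_of_integrable
    (μ := μ) (f := Q) (f' := Q') (B := ContinuousLinearMap.mul ℝ ℝ) hQ'i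
    (hvQi.neg.congr (.of_forall fun y ↦ by
      simp only [Pi.neg_apply, ContinuousLinearMap.mul_apply']; ring))
    hQi (fun y _ ↦ hQ y) (fun y _ ↦ hasLineDerivAt_gaussianWeight v y)
  simp only [ContinuousLinearMap.mul_apply'] at hparts
  rw [← neg_inj, ← hparts, ← integral_neg]
  congr with y
  ring

variable [Nontrivial E]

lemma integral_gaussianWeight_pos : 0 < ∫ y, gaussianWeight y ∂μ := by
  have hint : Integrable (gaussianWeight : E → ℝ) μ := by
    simpa using integrable_norm_pow_mul_gaussianWeight μ 0
  have hsupp : Function.support (gaussianWeight : E → ℝ) = Set.univ :=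
    Set.eq_univ_of_forall fun y ↦ (gaussianWeight_pos y).ne'
  rw [integral_pos_iff_support_of_nonneg (fun y ↦ (gaussianWeight_pos y).le) hint, hsupp]
  exact Measure.measure_univ_pos.2 (NeZero.ne μ)

lemma integral_inner_mul_inner_mul_gaussianWeight (a b : E) :
    ∫ y, ⟪a, y⟫ * ⟪b, y⟫ * gaussianWeight y ∂μ = ⟪a, b⟫ * ∫ y, gaussianWeight y ∂μ := by
  rw [integral_inner_mul_gaussianWeight μ (hasLineDerivAt_inner_right a b), integral_const_mul]
  · simpa using (integrable_norm_pow_mul_gaussianWeight μ 0).const_mul ⟪a, b⟫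
  · simpa using integrable_prod_inner_mul_gaussianWeight μ .univ ![a, b]
  · simpa using integrable_prod_inner_mul_gaussianWeight μ .univ ![b]

lemma integral_prod_four_inner_mul_gaussianWeight (a b c d : E) :
    ∫ y, ⟪a, y⟫ * (⟪b, y⟫ * ⟪c, y⟫ * ⟪d, y⟫) * gaussianWeight y ∂μ =
      (⟪a, b⟫ * ⟪c, d⟫ + ⟪a, c⟫ * ⟪b, d⟫ + ⟪a, d⟫ * ⟪b, c⟫) * ∫ y, gaussianWeight y ∂μ := by
  have hderiv (y : E) : HasLineDerivAt ℝ (fun y ↦ ⟪b, y⟫ * ⟪c, y⟫ * ⟪d, y⟫)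
      (⟪a, b⟫ * (⟪c, y⟫ * ⟪d, y⟫) + ⟪a, c⟫ * (⟪b, y⟫ * ⟪d, y⟫) + ⟪a, d⟫ * (⟪b, y⟫ * ⟪c, y⟫))
      y a := by
    refine (HasDerivAt.fun_mul (HasDerivAt.fun_mul (hasLineDerivAt_inner_right a b y)
      (hasLineDerivAt_inner_right a c y)) (hasLineDerivAt_inner_right a d y)).congr_deriv ?_
    simp only [zero_smul, add_zero]
    ring
  have hint₂ (u v w x : E) : Integrable (fun y ↦ ⟪u, v⟫ * (⟪w, y⟫ * ⟪x, y⟫ * gaussianWeight y)) μ :=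
    .const_mul (by simpa using integrable_prod_inner_mul_gaussianWeight μ .univ ![w, x]) _
  rw [integral_inner_mul_gaussianWeight μ hderiv]
  · simp only [add_mul, mul_assoc ⟪a, _⟫]
    rw [integral_add ((hint₂ a b c d).fun_add (hint₂ a c b d)) (hint₂ a d b c),
      integral_add (hint₂ a b c d) (hint₂ a c b d)]
    simp only [integral_const_mul, integral_inner_mul_inner_mul_gaussianWeight]
  · simpa only [add_mul, mul_assoc] using
      ((hint₂ a b c d).fun_add (hint₂ a c b d)).fun_add (hint₂ a d b c)
  · simpa [Fin.prod_univ_succ, mul_assoc] using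
      integrable_prod_inner_mul_gaussianWeight μ .univ ![a, b, c, d]
  · simpa [Fin.prod_univ_succ, mul_assoc] using
      integrable_prod_inner_mul_gaussianWeight μ .univ ![b, c, d]

lemma integral_norm_pow_four_mul_gaussianWeight :
    ∫ y, ‖y‖ ^ 4 * gaussianWeight y ∂μ =
      dim E * (dim E + 2) * ∫ y, gaussianWeight y ∂μ := by
  let e := stdOrthonormalBasis ℝ E
  have hnorm (y : E) : ‖y‖ ^ 4 * gaussianWeight y = ∑ x : _ × _,
      ⟪e x.1, y⟫ * (⟪e x.1, y⟫ * ⟪e x.2, y⟫ * ⟪e x.2, y⟫) * gaussianWeight y := by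
    have hsq : ‖y‖ ^ 2 = ∑ i, ⟪e i, y⟫ ^ 2 := by
      simpa using (e.sum_sq_norm_inner_right y).symm
    rw [← Finset.sum_mul, show ‖y‖ ^ 4 = ‖y‖ ^ 2 * ‖y‖ ^ 2 by ring, hsq, Finset.sum_mul_sum,
      Fintype.sum_prod_type]
    simp only [sq, mul_assoc]
  simp_rw [hnorm]
  rw [integral_finsetSum _ fun x _ ↦ by simpa [Fin.prod_univ_succ, mul_assoc] using
      integrable_prod_inner_mul_gaussianWeight μ .univ ![e x.1, e x.1, e x.2, e x.2]]
  simp_rw [integral_prod_four_inner_mul_gaussianWeight, ← Finset.sum_mul, Fintype.sum_prod_type,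
    e.inner_eq_ite]
  congr 1
  simp [Finset.sum_add_distrib]
  ring

end GaussianMoments

section SphereMoments

open scoped RealInnerProductSpace

variable {E : Type*} [NormedAddCommGroup E] [InnerProductSpace ℝ E] [FiniteDimensional ℝ E]
  [Nontrivial E] [MeasurableSpace E] [BorelSpace E] (μ : Measure E) [μ.IsAddHaarMeasure]

-- Against the Gaussian the integral is a radial factor times the spherical moment; the sum over
-- pairings evaluates it, and the same computation for `‖y‖ ^ 4` calibrates the radial factor.
lemma integral_toSphere_prod_four_inner (a b c d : E) :
    ∫ z, ⟪a, z.1⟫ * (⟪b, z.1⟫ * ⟪c, z.1⟫ * ⟪d, z.1⟫) ∂μ.toSphere =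
      μ.toSphere.real Set.univ / (dim E * (dim E + 2)) *
        (⟪a, b⟫ * ⟪c, d⟫ + ⟪a, c⟫ * ⟪b, d⟫ + ⟪a, d⟫ * ⟪b, c⟫) := by
  have hprod := integral_prod_four_inner_mul_gaussianWeight μ a b c d
  have hnorm := integral_norm_pow_four_mul_gaussianWeight μ (E := E)
  unfold gaussianWeight at hprod hnorm
  rw [integral_homogeneous_mul_radial (k := 4)
    μ (fun r y ↦ by simp only [inner_smul_right]; ring)
    fun r ↦ Real.exp (-(1 / 2) * r ^ 2)] at hprod
  rw [integral_homogeneous_mul_radial (k := 4) (Q := fun y ↦ ‖y‖ ^ 4)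
    μ (fun r y ↦ by simp [norm_smul, mul_pow, Even.pow_abs (show Even 4 by decide)])
    fun r ↦ Real.exp (-(1 / 2) * r ^ 2)] at hnorm
  have hsphere : ∫ z, ‖z.1‖ ^ 4 ∂μ.toSphere = μ.toSphere.real Set.univ := by simp
  rw [hsphere] at hnorm
  have hM : 0 < ∫ y : E, Real.exp (-(1 / 2) * ‖y‖ ^ 2) ∂μ := integral_gaussianWeight_pos μ
  have hn : (0 : ℝ) < dim E := Nat.cast_pos.2 Module.finrank_pos
  set M := ∫ y : E, Real.exp (-(1 / 2) * ‖y‖ ^ 2) ∂μ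
  set R := ∫ r in Set.Ioi (0 : ℝ), r ^ (dim E - 1 + 4) * Real.exp (-(1 / 2) * r ^ 2)
  have hR : R ≠ 0 :=
    right_ne_zero_of_mul (a := μ.toSphere.real Set.univ) (by rw [hnorm]; positivity)
  rw [div_mul_eq_mul_div, eq_div_iff (by positivity)]
  refine mul_right_cancel₀ hR ?_
  linear_combination (dim E * (dim E + 2) : ℝ) * hprod -
    (⟪a, b⟫ * ⟪c, d⟫ + ⟪a, c⟫ * ⟪b, d⟫ + ⟪a, d⟫ * ⟪b, c⟫) * hnorm

end SphereMoments

section SphereQuadraticForms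

variable {ι : Type*} [Fintype ι] [Nonempty ι]
  (μ : Measure (EuclideanSpace ℝ ι)) [μ.IsAddHaarMeasure]

lemma integral_toSphere_prod_four_coord [DecidableEq ι] (a b c d : ι) :
    ∫ z, z.1 a * z.1 b * (z.1 c * z.1 d) ∂μ.toSphere =
      μ.toSphere.real Set.univ / (Fintype.card ι * (Fintype.card ι + 2)) *
        ((if a = b then 1 else 0) * (if c = d then 1 else 0) +
          (if a = c then 1 else 0) * (if b = d then 1 else 0) +
          (if a = d then 1 else 0) * (if b = c then 1 else 0)) := by
  simpa [EuclideanSpace.inner_single_left, EuclideanSpace.inner_single_right, mul_assoc, eq_comm]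
    using integral_toSphere_prod_four_inner μ (EuclideanSpace.single a (1 : ℝ))
      (EuclideanSpace.single b 1) (EuclideanSpace.single c 1) (EuclideanSpace.single d 1)

lemma integral_toSphere_quadraticForm_mul_quadraticForm (B C : ι → ι → ℝ) :
    ∫ z, (∑ a, ∑ b, B a b * z.1 a * z.1 b) * (∑ c, ∑ d, C c d * z.1 c * z.1 d) ∂μ.toSphere =
      μ.toSphere.real Set.univ / (Fintype.card ι * (Fintype.card ι + 2)) *
        ((∑ a, B a a) * (∑ c, C c c) + ∑ a, ∑ b, B a b * (C a b + C b a)) := by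
  classical
  have hexpand (z : EuclideanSpace ℝ ι) :
      (∑ a, ∑ b, B a b * z a * z b) * (∑ c, ∑ d, C c d * z c * z d) =
        ∑ x : (ι × ι) × (ι × ι), B x.1.1 x.1.2 * C x.2.1 x.2.2 *
          (z x.1.1 * z x.1.2 * (z x.2.1 * z x.2.2)) := by
    simp only [← Fintype.sum_prod_type', Finset.sum_mul_sum]
    exact Finset.sum_congr rfl fun x _ ↦ by ring
  simp only [hexpand]
  rw [integral_finsetSum _ fun x _ ↦ (by fun_prop :
    Continuous _).integrable_of_hasCompactSupport (.of_compactSpace _)]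
  simp only [integral_const_mul, integral_toSphere_prod_four_coord]
  simp_rw [mul_left_comm (B _ _ * C _ _), ← Finset.mul_sum]
  congr 1
  simp_rw [Fintype.sum_prod_type, mul_add, Finset.sum_add_distrib]
  simp [Finset.sum_mul_sum]
  ring

end SphereQuadraticForms
section BubbleDerivatives

lemma rpow_mul_rpow_eq_inv_pow {x a b : ℝ} (hx : 0 < x) (k : ℕ) (hab : a + b = -k) :
    x ^ a * x ^ b = (x ^ k)⁻¹ := by
  rw [← Real.rpow_add hx, hab, Real.rpow_neg hx.le, Real.rpow_natCast]

variable {N : ℕ} {f g : EuclideanSpace ℝ (Fin N) → ℝ} (i j s : Fin N)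

lemma pd_const_mul (c : ℝ) (hf : Differentiable ℝ f) :
    pd N i (fun y ↦ c * f y) = fun y ↦ c * pd N i f y := by
  ext y
  simp [pd, fderiv_const_mul (hf y)]

lemma pd_add (hf : Differentiable ℝ f) (hg : Differentiable ℝ g) :
    pd N i (fun y ↦ f y + g y) = fun y ↦ pd N i f y + pd N i g y := by
  ext y
  simp [pd, fderiv_fun_add (hf y) (hg y)]

lemma pd_mul (hf : Differentiable ℝ f) (hg : Differentiable ℝ g) :
    pd N i (fun y ↦ f y * g y) = fun y ↦ f y * pd N i g y + g y * pd N i f y := by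
  ext y
  simp [pd, fderiv_fun_mul (hf y) (hg y)]

lemma pd_sum {ι : Type*} (t : Finset ι) {F : ι → EuclideanSpace ℝ (Fin N) → ℝ}
    (hF : ∀ a, Differentiable ℝ (F a)) :
    pd N i (fun y ↦ ∑ a ∈ t, F a y) = fun y ↦ ∑ a ∈ t, pd N i (F a) y := by
  ext y
  simp [pd, fderiv_fun_sum fun a _ ↦ hF a y]

variable (ξ : EuclideanSpace ℝ (Fin N))

lemma pd_coord_sub_const : pd N i (fun y ↦ y i - ξ i) = 1 := by
  ext y
  have hcoord : HasFDerivAt (fun y : EuclideanSpace ℝ (Fin N) ↦ y i) _ y :=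
    (EuclideanSpace.proj (𝕜 := ℝ) i).hasFDerivAt
  simp [pd, (hcoord.sub_const (ξ i)).fderiv]

/-- The function `λ² + |y - ξ|²`, of which the bubble centred at `ξ` is a constant multiple of a
real power. -/
def bubbleDenom (l : ℝ) (ξ y : EuclideanSpace ℝ (Fin N)) : ℝ := l ^ 2 + ‖y - ξ‖ ^ 2

variable {l : ℝ} (hl : 0 < l) (m : ℝ)

include hl

lemma bubbleDenom_pos (y : EuclideanSpace ℝ (Fin N)) : 0 < bubbleDenom l ξ y := by
  unfold bubbleDenom
  positivity

omit hl in
lemma hasFDerivAt_bubbleDenom (y : EuclideanSpace ℝ (Fin N)) :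
    HasFDerivAt (bubbleDenom l ξ) (2 • innerSL ℝ (y - ξ)) y :=
  ((hasFDerivAt_id (𝕜 := ℝ) y).sub_const ξ).norm_sq.const_add (l ^ 2)

lemma differentiable_bubbleDenom_rpow : Differentiable ℝ fun y ↦ bubbleDenom l ξ y ^ m := fun y ↦
  (hasFDerivAt_bubbleDenom ξ y).differentiableAt.rpow_const (.inl (bubbleDenom_pos ξ hl y).ne')

lemma pd_bubbleDenom_rpow :
    pd N i (fun y ↦ bubbleDenom l ξ y ^ m) =
      fun y ↦ 2 * m * ((y i - ξ i) * bubbleDenom l ξ y ^ (m - 1)) := by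
  ext y
  rw [pd, ((hasFDerivAt_bubbleDenom ξ y).rpow_const (.inl (bubbleDenom_pos ξ hl y).ne')).fderiv]
  simp [EuclideanSpace.inner_single_right]
  ring

lemma differentiable_pd_bubbleDenom_rpow :
    Differentiable ℝ (pd N i fun y ↦ bubbleDenom l ξ y ^ m) := by
  have hD := differentiable_bubbleDenom_rpow ξ hl (m - 1)
  rw [pd_bubbleDenom_rpow i ξ hl]
  fun_prop

lemma pd_pd_bubbleDenom_rpow :
    pd N s (pd N s fun y ↦ bubbleDenom l ξ y ^ m) = fun y ↦
      2 * m * (bubbleDenom l ξ y ^ (m - 1) +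
        2 * (m - 1) * ((y s - ξ s) ^ 2 * bubbleDenom l ξ y ^ (m - 2))) := by
  have hD := differentiable_bubbleDenom_rpow ξ hl (m - 1)
  rw [pd_bubbleDenom_rpow s ξ hl, pd_const_mul s _ (by fun_prop), pd_mul s (by fun_prop) hD,
    pd_bubbleDenom_rpow s ξ hl, pd_coord_sub_const]
  ext y
  simp only [Pi.one_apply, show m - 1 - 1 = m - 2 by ring]
  ring

lemma differentiable_pd_pd_bubbleDenom_rpow :
    Differentiable ℝ (pd N s (pd N s fun y ↦ bubbleDenom l ξ y ^ m)) := by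
  have hD (c : ℝ) := differentiable_bubbleDenom_rpow ξ hl c
  rw [pd_pd_bubbleDenom_rpow s ξ hl]
  fun_prop

lemma sum_pd_pd_bubbleDenom_rpow (y : EuclideanSpace ℝ (Fin N)) :
    ∑ s, pd N s (pd N s fun y ↦ bubbleDenom l ξ y ^ m) y =
      2 * m * (N + 2 * m - 2) * bubbleDenom l ξ y ^ (m - 1) +
        -(4 * m * (m - 1) * l ^ 2) * bubbleDenom l ξ y ^ (m - 2) := by
  have hsplit : bubbleDenom l ξ y ^ (m - 1) = bubbleDenom l ξ y ^ (m - 2) * bubbleDenom l ξ y := by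
    rw [← Real.rpow_add_one (bubbleDenom_pos ξ hl y).ne']
    ring_nf
  have hnorm : ∑ s, (y s - ξ s) ^ 2 = bubbleDenom l ξ y - l ^ 2 := by
    simp [bubbleDenom, EuclideanSpace.real_norm_sq_eq]
  simp_rw [pd_pd_bubbleDenom_rpow _ ξ hl, ← Finset.mul_sum, Finset.sum_add_distrib,
    ← Finset.mul_sum, ← Finset.sum_mul, hnorm, hsplit]
  simp
  ring

lemma sum_pd_pd_pd_bubbleDenom_rpow (y : EuclideanSpace ℝ (Fin N)) :
    ∑ s, pd N i (pd N s (pd N s fun y ↦ bubbleDenom l ξ y ^ m)) y =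
      4 * m * (m - 1) * (y i - ξ i) * ((N + 2 * m - 2) * bubbleDenom l ξ y ^ (m - 2) -
        2 * (m - 2) * l ^ 2 * bubbleDenom l ξ y ^ (m - 3)) := by
  have hD (c : ℝ) := differentiable_bubbleDenom_rpow ξ hl c
  rw [← congrFun (pd_sum i Finset.univ
    fun s ↦ differentiable_pd_pd_bubbleDenom_rpow s ξ hl m) y]
  simp_rw [sum_pd_pd_bubbleDenom_rpow ξ hl]
  rw [pd_add i (by fun_prop) (by fun_prop), pd_const_mul i _ (by fun_prop),
    pd_const_mul i _ (by fun_prop), pd_bubbleDenom_rpow i ξ hl, pd_bubbleDenom_rpow i ξ hl,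
    show m - 1 - 1 = m - 2 by ring, show m - 2 - 1 = m - 3 by ring]
  ring

/-- The standard bubble `(λ / (λ² + |y - ξ|²)) ^ ((N - 4) / 2)`. -/
def bubble (N : ℕ) (l : ℝ) (ξ y : EuclideanSpace ℝ (Fin N)) : ℝ :=
  (l / (l ^ 2 + ‖y - ξ‖ ^ 2)) ^ (((N : ℝ) - 4) / 2)

lemma bubble_eq_const_mul_bubbleDenom_rpow :
    bubble N l ξ = fun y ↦
      l ^ (((N : ℝ) - 4) / 2) * bubbleDenom l ξ y ^ (-(((N : ℝ) - 4) / 2)) := by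
  ext y
  have hpos := bubbleDenom_pos ξ hl y
  rw [bubble, ← bubbleDenom, Real.div_rpow hl.le hpos.le, Real.rpow_neg hpos.le, div_eq_mul_inv]

lemma pd_bubble (y : EuclideanSpace ℝ (Fin N)) :
    pd N i (bubble N l ξ) y = -(l ^ (((N : ℝ) - 4) / 2) * (N - 4) *
      ((y i - ξ i) * bubbleDenom l ξ y ^ (-(N : ℝ) / 2 + 1))) := by
  rw [bubble_eq_const_mul_bubbleDenom_rpow ξ hl,
    pd_const_mul i _ (differentiable_bubbleDenom_rpow ξ hl _), pd_bubbleDenom_rpow i ξ hl,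
    show -(((N : ℝ) - 4) / 2) - 1 = -(N : ℝ) / 2 + 1 by ring]
  ring

lemma sum_pd_pd_pd_bubble (y : EuclideanSpace ℝ (Fin N)) :
    ∑ s, pd N i (pd N s (pd N s (bubble N l ξ))) y =
      l ^ (((N : ℝ) - 4) / 2) * ((N - 4) * (N - 2)) * ((y i - ξ i) *
        (2 * bubbleDenom l ξ y ^ (-(N : ℝ) / 2) +
          N * l ^ 2 * bubbleDenom l ξ y ^ (-(N : ℝ) / 2 - 1))) := by
  simp_rw [bubble_eq_const_mul_bubbleDenom_rpow ξ hl,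
    pd_const_mul _ _ (differentiable_bubbleDenom_rpow ξ hl _),
    pd_const_mul _ _ (differentiable_pd_bubbleDenom_rpow _ ξ hl _),
    pd_const_mul _ _ (differentiable_pd_pd_bubbleDenom_rpow _ ξ hl _), ← Finset.mul_sum,
    sum_pd_pd_pd_bubbleDenom_rpow i ξ hl, show -(((N : ℝ) - 4) / 2) - 2 = -(N : ℝ) / 2 by ring,
    show -(((N : ℝ) - 4) / 2) - 3 = -(N : ℝ) / 2 - 1 by ring]
  ring

/-- The radial function `G` with `∂_iΔu ∂_ju = (y - ξ)_i (y - ξ)_j G(|y - ξ|²)` for the bubble `u`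
centred at `ξ`. -/
def bubbleProfile (N : ℕ) (l x : ℝ) : ℝ :=
  l ^ (N - 4) * ((N - 2) * (N - 4) ^ 2) *
    (N * x / (l ^ 2 + x) ^ N - (N + 2) / (l ^ 2 + x) ^ (N - 1))

lemma sum_pd_pd_pd_bubble_mul_pd_bubble (hN : 4 ≤ N) (y : EuclideanSpace ℝ (Fin N)) :
    (∑ s, pd N i (pd N s (pd N s (bubble N l ξ))) y) * pd N j (bubble N l ξ) y =
      (y i - ξ i) * (y j - ξ j) * bubbleProfile N l (‖y - ξ‖ ^ 2) := by
  have hpos := bubbleDenom_pos ξ hl y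
  have hl_pow : l ^ (((N : ℝ) - 4) / 2) * l ^ (((N : ℝ) - 4) / 2) = l ^ (N - 4) := by
    rw [← Real.rpow_add hl, add_halves, ← Real.rpow_natCast, Nat.cast_sub hN, Nat.cast_ofNat]
  have hpow₁ : bubbleDenom l ξ y ^ (-(N : ℝ) / 2) * bubbleDenom l ξ y ^ (-(N : ℝ) / 2 + 1) =
      (bubbleDenom l ξ y ^ (N - 1))⁻¹ :=
    rpow_mul_rpow_eq_inv_pow hpos _ (by push_cast [show 1 ≤ N by lia]; ring)
  have hpow₂ : bubbleDenom l ξ y ^ (-(N : ℝ) / 2 - 1) * bubbleDenom l ξ y ^ (-(N : ℝ) / 2 + 1) =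
      (bubbleDenom l ξ y ^ N)⁻¹ :=
    rpow_mul_rpow_eq_inv_pow hpos _ (by ring)
  have hpow₃ : (bubbleDenom l ξ y ^ (N - 1))⁻¹ =
      bubbleDenom l ξ y * (bubbleDenom l ξ y ^ N)⁻¹ := by
    rw [← pow_sub_one_mul (by lia : N ≠ 0)]
    field_simp
  have hx : ‖y - ξ‖ ^ 2 = bubbleDenom l ξ y - l ^ 2 := by simp [bubbleDenom]
  rw [sum_pd_pd_pd_bubble i ξ hl, pd_bubble j ξ hl, bubbleProfile, ← bubbleDenom,
    div_eq_mul_inv _ (_ ^ (N - 1)), hpow₃, hx, ← hl_pow]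
  rw [hpow₃] at hpow₁
  linear_combination -(l ^ (((N : ℝ) - 4) / 2) * l ^ (((N : ℝ) - 4) / 2) * (N - 2) * (N - 4) ^ 2 *
    (y i - ξ i) * (y j - ξ j)) * (2 * hpow₁ + N * l ^ 2 * hpow₂)

lemma contDiff_bubbleProfile_norm_sub_sq (n : ℕ∞) (y : EuclideanSpace ℝ (Fin N)) :
    ContDiff ℝ n fun ξ ↦ bubbleProfile N l (‖y - ξ‖ ^ 2) := by
  have hden : ContDiff ℝ n fun ξ : EuclideanSpace ℝ (Fin N) ↦ l ^ 2 + ‖y - ξ‖ ^ 2 :=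
    contDiff_const.add ((contDiff_const.sub contDiff_id).norm_sq ℝ)
  have hpos (ξ : EuclideanSpace ℝ (Fin N)) : l ^ 2 + ‖y - ξ‖ ^ 2 ≠ 0 := by positivity
  have hnum : ContDiff ℝ n fun ξ : EuclideanSpace ℝ (Fin N) ↦ (N : ℝ) * ‖y - ξ‖ ^ 2 :=
    contDiff_const.mul ((contDiff_const.sub contDiff_id).norm_sq ℝ)
  exact contDiff_const.mul ((hnum.div (hden.pow _) fun ξ ↦ pow_ne_zero _ (hpos ξ)).sub
    (contDiff_const.div (hden.pow _) fun ξ ↦ pow_ne_zero _ (hpos ξ)))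

end BubbleDerivatives

section SecondParameterDerivative

lemma hasDerivAt_id_mul_of_continuousAt {g : ℝ → ℝ} (hg : ContinuousAt g 0) :
    HasDerivAt (fun a ↦ a * g a) (g 0) 0 := by
  rw [hasDerivAt_iff_tendsto_slope]
  refine (hg.tendsto.mono_left nhdsWithin_le_nhds).congr' ?_
  filter_upwards [self_mem_nhdsWithin] with a ha
  simp [slope_def_field, mul_div_cancel_left₀ (g a) ha]

variable {N : ℕ} (p q : Fin N) {k : EuclideanSpace ℝ (Fin N) → ℝ}

lemma quadraticForm_single_add_single (M : Fin N → Fin N → ℝ) (a b : ℝ) :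
    ∑ i, ∑ j, M i j *
        (a • EuclideanSpace.single p (1 : ℝ) + b • EuclideanSpace.single q (1 : ℝ)) i *
        (a • EuclideanSpace.single p (1 : ℝ) + b • EuclideanSpace.single q (1 : ℝ)) j =
      a ^ 2 * M p p + a * b * (M p q + M q p) + b ^ 2 * M q q := by
  simp [mul_add, add_mul, Finset.sum_add_distrib]
  ring

lemma d2Param_quadraticForm_mul (M : Fin N → Fin N → ℝ) (hk : ContDiff ℝ 1 k) :
    d2Param N p q (fun ξ ↦ (∑ i, ∑ j, M i j * ξ i * ξ j) * k ξ) = (M p q + M q p) * k 0 := by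
  set ep : EuclideanSpace ℝ (Fin N) := EuclideanSpace.single p (1 : ℝ) with hep
  set eq : EuclideanSpace ℝ (Fin N) := EuclideanSpace.single q (1 : ℝ) with heq
  have hinner (a : ℝ) : deriv (fun b : ℝ ↦
      (a ^ 2 * M p p + a * b * (M p q + M q p) + b ^ 2 * M q q) * k (a • ep + b • eq)) 0 =
        a * ((M p q + M q p) * k (a • ep) + a * M p p * fderiv ℝ k (a • ep) eq) := by
    have hform : HasDerivAt (fun b : ℝ ↦ a ^ 2 * M p p + a * b * (M p q + M q p) + b ^ 2 * M q q)
        (a * (M p q + M q p)) 0 := by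
      have hid := hasDerivAt_id' (0 : ℝ)
      refine ((((hid.const_mul a).mul_const (M p q + M q p)).const_add
        (a ^ 2 * M p p)).fun_add ((hid.pow 2).mul_const (M q q))).congr_deriv ?_
      simp
    have hk' : HasDerivAt (fun b : ℝ ↦ k (a • ep + b • eq)) (fderiv ℝ k (a • ep) eq) 0 :=
      (hk.differentiable one_ne_zero (a • ep)).hasFDerivAt.hasLineDerivAt eq
    rw [(hform.fun_mul hk').deriv]
    simp only [zero_smul, add_zero]
    ring
  have hk'c : Continuous fun a : ℝ ↦ fderiv ℝ k (a • ep) eq :=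
    ((hk.continuous_fderiv one_ne_zero).comp (by fun_prop)).clm_apply continuous_const
  have hkc : Continuous fun a : ℝ ↦ k (a • ep) := hk.continuous.comp (by fun_prop)
  have hcont : Continuous fun a : ℝ ↦
      (M p q + M q p) * k (a • ep) + a * M p p * fderiv ℝ k (a • ep) eq :=
    (continuous_const.mul hkc).add ((continuous_id.mul continuous_const).mul hk'c)
  simp_rw [d2Param, quadraticForm_single_add_single, ← hep, ← heq, hinner]
  rw [(hasDerivAt_id_mul_of_continuousAt hcont.continuousAt).deriv]
  simp

end SecondParameterDerivative

section WeylTensor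

variable {N : ℕ} {W : Fin N → Fin N → Fin N → Fin N → ℝ}

lemma sum_add_swap_mul_add_swap {ι : Type*} [Fintype ι] (B C : ι → ι → ℝ) :
    ∑ i, ∑ j, (B i j + B j i) * (C i j + C j i) = 2 * ∑ i, ∑ j, B i j * (C i j + C j i) := by
  have hswap : ∑ i, ∑ j, B j i * (C i j + C j i) = ∑ i, ∑ j, B i j * (C i j + C j i) := by
    rw [Finset.sum_comm]
    simp only [add_comm]
  simp only [add_mul, Finset.sum_add_distrib, hswap, two_mul]

lemma Hmat_smul (i j : Fin N) (r : ℝ) (y : EuclideanSpace ℝ (Fin N)) :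
    Hmat N W i j (r • y) = r ^ 2 * Hmat N W i j y := by
  simp only [Hmat, PiLp.smul_apply, smul_eq_mul, Finset.mul_sum]
  exact Finset.sum_congr rfl fun p _ ↦ Finset.sum_congr rfl fun q _ ↦ by ring

lemma continuous_Hmat (i j : Fin N) : Continuous (Hmat N W i j) := by
  unfold Hmat
  fun_prop

lemma Hmat_comm (hpair : ∀ i p j q, W i p j q = W j q i p) (i j : Fin N) :
    Hmat N W i j = Hmat N W j i := by
  ext y
  rw [Hmat, Hmat, Finset.sum_comm]
  refine Finset.sum_congr rfl fun q _ ↦ Finset.sum_congr rfl fun p _ ↦ ?_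
  rw [hpair]
  ring

lemma sum_sum_eq_zero_of_antisymm {ι : Type*} [Fintype ι] {A : ι → ι → ℝ}
    (hA : ∀ a b, A a b = -A b a) : ∑ a, ∑ b, A a b = 0 := by
  refine self_eq_neg.1 ?_
  calc ∑ a, ∑ b, A a b = ∑ a, ∑ b, -A b a := by simp only [← hA]
    _ = -∑ b, ∑ a, A b a := by rw [Finset.sum_comm]; simp only [Finset.sum_neg_distrib]

lemma sum_Hmat_mul_coord_eq_zero (hanti : ∀ i p j q, W i p j q = -W i p q j) (i : Fin N)
    (y : EuclideanSpace ℝ (Fin N)) : ∑ j, Hmat N W i j y * y j = 0 := by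
  simp only [Hmat, Finset.sum_mul]
  rw [Finset.sum_comm]
  refine Finset.sum_eq_zero fun p _ ↦ sum_sum_eq_zero_of_antisymm fun j q ↦ ?_
  rw [hanti]
  ring

lemma swap_both_pairs (hanti : ∀ i p j q, W i p j q = -W i p q j)
    (hpair : ∀ i p j q, W i p j q = W j q i p) (i p j q : Fin N) :
    W i p j q = W p i q j := by
  rw [hanti, hpair, hanti, neg_neg, hpair]

/-- The contraction `∑ (W_{ikjp} + W_{ipjk}) (W_{ikjq} + W_{iqjk})` over `i, j, k`. -/
def weylContraction (W : Fin N → Fin N → Fin N → Fin N → ℝ) (p q : Fin N) : ℝ :=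
  ∑ i, ∑ j, ∑ k, (W i k j p + W i p j k) * (W i k j q + W i q j k)

lemma weylContraction_eq_two_mul_sum
    (hanti : ∀ i p j q, W i p j q = -W i p q j) (hpair : ∀ i p j q, W i p j q = W j q i p)
    (p q : Fin N) :
    weylContraction W p q = 2 * ∑ t, ∑ a, ∑ b, W t a p b * (W t a q b + W t b q a) := by
  have hsymm (i j k p : Fin N) : W i k j p + W i p j k = W k i p j + W k j p i := by
    rw [swap_both_pairs hanti hpair i k, hpair i p, swap_both_pairs hanti hpair j k]
  rw [Finset.mul_sum]
  simp_rw [← sum_add_swap_mul_add_swap]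
  rw [weylContraction, eq_comm, Finset.sum_comm]
  refine Finset.sum_congr rfl fun i _ ↦ ?_
  rw [Finset.sum_comm]
  refine Finset.sum_congr rfl fun j _ ↦ Finset.sum_congr rfl fun k _ ↦ ?_
  rw [hsymm i j k p, hsymm i j k q]

lemma two_mul_integral_toSphere_sum_Hmat_mul_Hmat [NeZero N]
    (hanti : ∀ i p j q, W i p j q = -W i p q j) (hpair : ∀ i p j q, W i p j q = W j q i p)
    (htrace : ∀ p q, ∑ i, W i p i q = 0) (p q : Fin N) :
    2 * ∫ z, ∑ t, Hmat N W t p z.1 * Hmat N W t q z.1 ∂sphereMeasure N =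
      sphereArea N / (N * (N + 2)) * weylContraction W p q := by
  have htrace' (t p : Fin N) : ∑ a, W t a p a = 0 := by
    simpa only [swap_both_pairs hanti hpair t] using htrace t p
  have hint (t : Fin N) : Integrable (fun z ↦ Hmat N W t p z.1 * Hmat N W t q z.1)
      (volume : Measure (EuclideanSpace ℝ (Fin N))).toSphere :=
    (((continuous_Hmat t p).mul (continuous_Hmat t q)).comp
      continuous_subtype_val).integrable_of_hasCompactSupport (.of_compactSpace _)
  rw [sphereMeasure, integral_finsetSum _ fun t _ ↦ hint t]
  simp_rw [Hmat, integral_toSphere_quadraticForm_mul_quadraticForm, htrace',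
    zero_mul, zero_add, ← Finset.mul_sum, weylContraction_eq_two_mul_sum hanti hpair,
    Fintype.card_fin]
  exact mul_left_comm _ _ _

end WeylTensor

section RationalFunctions

open Polynomial

lemma integrableOn_Ioi_eval_div_eval {P Q : ℝ[X]} {a : ℝ} (hQ : ∀ x ∈ Set.Ici a, Q.eval x ≠ 0)
    (hdeg : P.natDegree + 2 ≤ Q.natDegree) :
    IntegrableOn (fun x ↦ P.eval x / Q.eval x) (Set.Ioi a) := by
  have hcont : ContinuousOn (fun x ↦ P.eval x / Q.eval x) (Set.Ici a) :=
    P.continuousOn.div Q.continuousOn hQ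
  have hbigO : (fun x ↦ P.eval x * (1 + x ^ 2)) =O[Filter.atTop] fun x ↦ Q.eval x := by
    have hPdeg : (P * (1 + X ^ 2)).natDegree ≤ Q.natDegree := by
      refine (natDegree_mul_le.trans ?_).trans hdeg
      gcongr
      compute_degree
    have hQ₀ : Q ≠ 0 := fun h ↦ hQ a Set.self_mem_Ici (by simp [h])
    simpa using isBigO_atTop_of_degree_le _ _
      ((degree_le_of_natDegree_le hPdeg).trans_eq (degree_eq_natDegree hQ₀).symm)
  have hdecay : (fun x ↦ P.eval x / Q.eval x) =O[Filter.atTop] fun x : ℝ ↦ (1 + x ^ 2)⁻¹ := by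
    refine (hbigO.mul (Asymptotics.isBigO_refl (fun x ↦ ((1 + x ^ 2) * Q.eval x)⁻¹) _)).congr' ?_ ?_
    all_goals
      filter_upwards [Filter.eventually_ge_atTop a] with x hx
      have := hQ x hx
      field_simp
  exact (hcont.locallyIntegrableOn measurableSet_Ici).integrableOn_of_isBigO_atTop hdecay
    (integrable_inv_one_add_sq.integrableAtFilter _) |>.mono_set Set.Ioi_subset_Ici_self

variable {l : ℝ} (hl : 0 < l)

include hl

lemma integrableOn_Ioi_eval_sq_mul_pow_div_pow {P : ℝ[X]} (c : ℝ) {d m k : ℕ}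
    (hP : P.natDegree ≤ d) (hk : 4 * d + m + 2 ≤ 2 * k) :
    IntegrableOn (fun r ↦ P.eval (r ^ 2) ^ 2 * (c * r ^ m / (l ^ 2 + r ^ 2) ^ k)) (Set.Ioi 0) := by
  have hQ (x : ℝ) : ((C (l ^ 2) + X ^ 2) ^ k).eval x ≠ 0 := by
    simp only [eval_pow, eval_add, eval_C, eval_X]
    positivity
  have hQdeg : ((C (l ^ 2) + X ^ 2) ^ k).natDegree = 2 * k := by
    rw [natDegree_pow, natDegree_C_add, natDegree_X_pow, mul_comm]
  have hPdeg : ((P.comp (X ^ 2)) ^ 2 * (C c * X ^ m)).natDegree ≤ 4 * d + m := by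
    refine natDegree_mul_le.trans (add_le_add ?_ (natDegree_C_mul_X_pow_le c m))
    rw [natDegree_pow, natDegree_comp, natDegree_X_pow]
    lia
  refine (integrableOn_Ioi_eval_div_eval (P := P.comp (X ^ 2) ^ 2 * (C c * X ^ m))
    (fun x _ ↦ hQ x) (by lia)).congr_fun (fun x _ ↦ ?_)
    measurableSet_Ioi
  simp [mul_div_assoc]

lemma integrableOn_Ioi_eval_sq_mul_sub {P : ℝ[X]} {N d : ℕ} (hP : P.natDegree ≤ d)
    (hN : 4 * d + 7 ≤ N) :
    IntegrableOn (fun r ↦ P.eval (r ^ 2) ^ 2 * (N * r ^ (N + 5) / (l ^ 2 + r ^ 2) ^ N -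
      (N + 2) * r ^ (N + 3) / (l ^ 2 + r ^ 2) ^ (N - 1))) (Set.Ioi 0) := by
  simp only [mul_sub]
  exact (integrableOn_Ioi_eval_sq_mul_pow_div_pow hl N hP (by lia)).sub
    (integrableOn_Ioi_eval_sq_mul_pow_div_pow hl (N + 2) hP (by lia))

end RationalFunctions

section WeylDensity

variable {N : ℕ} {W : Fin N → Fin N → Fin N → Fin N → ℝ} {f : ℝ → ℝ} {l : ℝ}

/-- The integrand `∑ H̄_{tj} H̄_{it} ∂_i∂_s∂_s u ∂_j u` (sum over `i, j, s, t`) attached to a test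
function `u`. -/
def weylDensity (N : ℕ) (W : Fin N → Fin N → Fin N → Fin N → ℝ) (f : ℝ → ℝ)
    (u : EuclideanSpace ℝ (Fin N) → ℝ) (y : EuclideanSpace ℝ (Fin N)) : ℝ :=
  ∑ i, ∑ j, ∑ s, ∑ t,
    Hbar N W f t j y * Hbar N W f i t y * pd N i (pd N s (pd N s u)) y * pd N j u y

lemma weylDensity_eq_sum_of_sum_pd_mul_pd_eq {u : EuclideanSpace ℝ (Fin N) → ℝ}
    {y v : EuclideanSpace ℝ (Fin N)} {c : ℝ}
    (hpair : ∀ i p j q, W i p j q = W j q i p)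
    (hu : ∀ i j, (∑ s, pd N i (pd N s (pd N s u)) y) * pd N j u y = v i * v j * c) :
    weylDensity N W f u y = (∑ t, (∑ j, Hbar N W f t j y * v j) ^ 2) * c := by
  have hsymm (i t : Fin N) : Hbar N W f i t y = Hbar N W f t i y := by
    rw [Hbar, Hbar, Hmat_comm hpair]
  have hinner (i j : Fin N) : ∑ s, ∑ t, Hbar N W f t j y * Hbar N W f i t y *
      pd N i (pd N s (pd N s u)) y * pd N j u y =
        ∑ t, Hbar N W f t i y * v i * (Hbar N W f t j y * v j) * c := by
    rw [Finset.sum_comm]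
    refine Finset.sum_congr rfl fun t _ ↦ ?_
    rw [← Finset.sum_mul, ← Finset.mul_sum, mul_assoc, hu, hsymm i t]
    ring
  simp_rw [weylDensity, hinner, sq, Finset.sum_mul_sum, Finset.sum_mul]
  rw [eq_comm, Finset.sum_comm]
  exact Finset.sum_congr rfl fun i _ ↦ Finset.sum_comm

lemma weylDensity_bubble (hanti : ∀ i p j q, W i p j q = -W i p q j)
    (hpair : ∀ i p j q, W i p j q = W j q i p) (hl : 0 < l) (hN : 4 ≤ N)
    (ξ y : EuclideanSpace ℝ (Fin N)) :
    weylDensity N W f (bubble N l ξ) y =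
      (∑ t, (∑ j, Hbar N W f t j y * ξ j) ^ 2) * bubbleProfile N l (‖y - ξ‖ ^ 2) := by
  have hradial (t : Fin N) : ∑ j, Hbar N W f t j y * y j = 0 := by
    simp_rw [Hbar, mul_assoc, ← Finset.mul_sum, sum_Hmat_mul_coord_eq_zero hanti, mul_zero]
  rw [weylDensity_eq_sum_of_sum_pd_mul_pd_eq (v := y - ξ) hpair fun i j ↦
    sum_pd_pd_pd_bubble_mul_pd_bubble i j ξ hl hN y]
  simp [mul_sub, Finset.sum_sub_distrib, hradial]

lemma d2Param_weylDensity_bubble (hanti : ∀ i p j q, W i p j q = -W i p q j)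
    (hpair : ∀ i p j q, W i p j q = W j q i p) (hl : 0 < l) (hN : 4 ≤ N) (p q : Fin N)
    (y : EuclideanSpace ℝ (Fin N)) :
    d2Param N p q (fun ξ ↦ weylDensity N W f (bubble N l ξ) y) =
      2 * (∑ t, Hmat N W t p y * Hmat N W t q y) *
        (f (‖y‖ ^ 2) ^ 2 * bubbleProfile N l (‖y‖ ^ 2)) := by
  have hform (ξ : EuclideanSpace ℝ (Fin N)) : ∑ t, (∑ j, Hbar N W f t j y * ξ j) ^ 2 =
      ∑ i, ∑ j, (∑ t, Hbar N W f t i y * Hbar N W f t j y) * ξ i * ξ j := by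
    simp_rw [sq, Finset.sum_mul_sum, Finset.sum_mul]
    rw [Finset.sum_comm]
    refine Finset.sum_congr rfl fun i _ ↦ ?_
    rw [Finset.sum_comm]
    exact Finset.sum_congr rfl fun j _ ↦ Finset.sum_congr rfl fun t _ ↦ by ring
  simp_rw [weylDensity_bubble hanti hpair hl hN, hform]
  rw [d2Param_quadraticForm_mul p q _ (contDiff_bubbleProfile_norm_sub_sq hl 1 y), sub_zero]
  have hHbar (i j : Fin N) : ∑ t, Hbar N W f t i y * Hbar N W f t j y =
      f (‖y‖ ^ 2) ^ 2 * ∑ t, Hmat N W t i y * Hmat N W t j y := by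
    rw [Finset.mul_sum]
    exact Finset.sum_congr rfl fun t _ ↦ by rw [Hbar, Hbar]; ring
  have hswap : ∑ t, Hmat N W t q y * Hmat N W t p y = ∑ t, Hmat N W t p y * Hmat N W t q y := by
    simp only [mul_comm]
  rw [hHbar, hHbar, hswap]
  ring

lemma pow_mul_sq_mul_bubbleProfile (f : ℝ → ℝ) (l r : ℝ) :
    r ^ (N + 3) * (f (r ^ 2) ^ 2 * bubbleProfile N l (r ^ 2)) =
      l ^ (N - 4) * ((N - 2) * (N - 4) ^ 2) *
        (f (r ^ 2) ^ 2 * (N * r ^ (N + 5) / (l ^ 2 + r ^ 2) ^ N -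
          (N + 2) * r ^ (N + 3) / (l ^ 2 + r ^ 2) ^ (N - 1))) := by
  rw [bubbleProfile]
  ring

end WeylDensity

theorem stmt_14_general {N : ℕ} (hN : 4 ≤ N) {W : Fin N → Fin N → Fin N → Fin N → ℝ}
    (hanti : ∀ i p j q, W i p j q = -W i p q j) (hpair : ∀ i p j q, W i p j q = W j q i p)
    (htrace : ∀ p q, ∑ i, W i p i q = 0) {l : ℝ} (hl : 0 < l) {f : ℝ → ℝ}
    (hf : IntegrableOn (fun r ↦ f (r ^ 2) ^ 2 * (N * r ^ (N + 5) / (l ^ 2 + r ^ 2) ^ N -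
      (N + 2) * r ^ (N + 3) / (l ^ 2 + r ^ 2) ^ (N - 1))) (Set.Ioi 0)) :
    (∀ y, weylDensity N W f (bubble N l 0) y = 0) ∧
    ∀ p q, Integrable (fun y ↦ d2Param N p q fun ξ ↦ weylDensity N W f (bubble N l ξ) y) ∧
      ∫ y, d2Param N p q (fun ξ ↦ weylDensity N W f (bubble N l ξ) y) =
        sphereArea N * weylContraction W p q * l ^ (N - 4) *
          ((N - 2) * (N - 4) ^ 2 / (N * (N + 2))) *
          ∫ r in Set.Ioi (0 : ℝ), f (r ^ 2) ^ 2 * (N * r ^ (N + 5) / (l ^ 2 + r ^ 2) ^ N -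
            (N + 2) * r ^ (N + 3) / (l ^ 2 + r ^ 2) ^ (N - 1)) := by
  have : NeZero N := ⟨by lia⟩
  have hdim : Module.finrank ℝ (EuclideanSpace ℝ (Fin N)) - 1 + 4 = N + 3 := by
    rw [finrank_euclideanSpace_fin]
    lia
  refine ⟨fun y ↦ by simp [weylDensity_bubble hanti hpair hl hN], fun p q ↦ ?_⟩
  have hhom (r : ℝ) (y : EuclideanSpace ℝ (Fin N)) :
      2 * ∑ t, Hmat N W t p (r • y) * Hmat N W t q (r • y) =
        r ^ 4 * (2 * ∑ t, Hmat N W t p y * Hmat N W t q y) := by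
    simp_rw [mul_left_comm (r ^ 4), Finset.mul_sum, Hmat_smul]
    exact Finset.sum_congr rfl fun t _ ↦ by ring
  have hcont : Continuous fun y ↦ 2 * ∑ t, Hmat N W t p y * Hmat N W t q y :=
    continuous_const.mul (continuous_finsetSum _ fun t _ ↦
      (continuous_Hmat t p).mul (continuous_Hmat t q))
  simp_rw [d2Param_weylDensity_bubble hanti hpair hl hN]
  constructor
  · refine integrable_homogeneous_mul_radial volume hhom hcont
      (φ := fun r ↦ f (r ^ 2) ^ 2 * bubbleProfile N l (r ^ 2)) ?_
    simp_rw [hdim, pow_mul_sq_mul_bubbleProfile]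
    exact hf.const_mul _
  · rw [integral_homogeneous_mul_radial volume hhom
      fun r ↦ f (r ^ 2) ^ 2 * bubbleProfile N l (r ^ 2)]
    simp_rw [hdim, pow_mul_sq_mul_bubbleProfile, integral_const_mul]
    rw [← sphereMeasure, two_mul_integral_toSphere_sum_Hmat_mul_Hmat hanti hpair htrace]
    ring

theorem stmt_14 (N : ℕ) (hN : 25 ≤ N)
    (W : Fin N → Fin N → Fin N → Fin N → ℝ)
    (hW1 : ∀ i p j q, W i p j q = - W p i j q)
    (hW2 : ∀ i p j q, W i p j q = - W i p q j)
    (hW3 : ∀ i p j q, W i p j q = W j q i p)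
    (hBianchi : ∀ i p j q, W i p j q + W i j q p + W i q p j = 0)
    (hTrace : ∀ p q, ∑ i : Fin N, W i p i q = 0)
    (f : ℝ → ℝ)
    (hf : ∃ P : Polynomial ℝ, P.degree ≤ 4 ∧ ∀ x, f x = P.eval x)
    (lam' : ℝ) (hlam' : 0 < lam')
    (U : EuclideanSpace ℝ (Fin N) → EuclideanSpace ℝ (Fin N) → ℝ)
    (hU : ∀ ξ' y, U ξ' y = (lam' / (lam' ^ 2 + ‖y - ξ'‖ ^ 2)) ^ (((N : ℝ) - 4) / 2))
    (E : EuclideanSpace ℝ (Fin N) → EuclideanSpace ℝ (Fin N) → ℝ)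
    (hE : ∀ y ξ', E y ξ'
        = ∑ i : Fin N, ∑ j : Fin N, ∑ s : Fin N, ∑ t : Fin N,
            Hbar N W f t j y * Hbar N W f i t y
              * pd N i (pd N s (pd N s (U ξ'))) y * pd N j (U ξ') y) :
    ((∫ y : EuclideanSpace ℝ (Fin N), E y 0) = 0) ∧
    (∀ p q : Fin N,
      (∫ y : EuclideanSpace ℝ (Fin N), d2Param N p q (E y))
        = sphereArea N
            * (∑ i : Fin N, ∑ j : Fin N, ∑ k : Fin N,
                (W i k j p + W i p j k) * (W i k j q + W i q j k))
            * lam' ^ (N - 4)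
            * (((N : ℝ) - 2) * ((N : ℝ) - 4) ^ 2 / (N * ((N : ℝ) + 2)))
            * ∫ r in Set.Ioi (0 : ℝ),
                f (r ^ 2) ^ 2
                  * ((N : ℝ) * r ^ (N + 5) / (lam' ^ 2 + r ^ 2) ^ N
                    - ((N : ℝ) + 2) * r ^ (N + 3) / (lam' ^ 2 + r ^ 2) ^ (N - 1))) := by
  obtain ⟨P, hP, hfP⟩ := hf
  obtain rfl : f = fun x ↦ P.eval x := funext hfP
  obtain rfl : U = bubble N lam' := funext₂ hU
  obtain rfl : E = fun y ξ ↦ weylDensity N W (fun x ↦ P.eval x) (bubble N lam' ξ) y := funext₂ hE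
  have h := stmt_14_general (by lia) hW2 hW3 hTrace hlam' (f := fun x ↦ P.eval x)
    (integrableOn_Ioi_eval_sq_mul_sub hlam' (Polynomial.natDegree_le_of_degree_le hP) (by lia))
  exact ⟨by simp only [h.1, integral_zero], fun p q ↦ (h.2 p q).2⟩
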